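/- Let K be an imaginary quadratic field with fundamental discriminant D whose distinct prime divisors are p1, …, pt (ordered so that p_t = 2 if 2 | D), and let R be the Rédei matrix of K. Let c be a positive odd integer coprime to D such that the Legendre symbol (D/p) = 1 for every prime p dividing c. Then the map d ↦ X_d = (v_{p1}(d), …, v_{pt}(d))^T is a bijection from {d ∈ D(K) : d·c ∈ N(K^×)} onto {X ∈ F_2^t : R·X = C}, where C = ([c/p_1], …, [c/p_{t−1}])^T, with inverse (x1, …, xt)^T ↦ Π p_i^{x_i}. -/

import Mathlib

open NumberField

open Classical in
/-- The additive Legendre symbol `[a/p] ∈ F₂`: `0` if `a` is a square mod `p`, `1` otherwise. -/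
noncomputable def aLeg (a : ℤ) (p : ℕ) : ZMod 2 :=
  if IsSquare ((a : ZMod p)) then 0 else 1

/-- The Rédei matrix of a quadratic field with discriminant `D` and prime divisors
`p₁, …, p_t` of `D`: the `(t−1) × t` matrix over `F₂` with `r_{ii} = [(D/p_i^*)/p_i]` and
`r_{ij} = [p_j/p_i]` for `i ≠ j`, where `p_i^* = (−1)^{(p_i−1)/2}·p_i`. -/
noncomputable def redeiMatrix (D : ℤ) (t : ℕ) (p : Fin t → ℕ) :
    Matrix (Fin (t - 1)) (Fin t) (ZMod 2) :=
  Matrix.of fun i j =>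
    let i' : Fin t := i.castLE (Nat.sub_le t 1)
    if (i' : ℕ) = (j : ℕ) then
      aLeg (D / ((-1) ^ ((p i' - 1) / 2) * (p i' : ℤ))) (p i')
    else aLeg (p j) (p i')



/-- `b` is of the form `x² - a y²`. -/
def IsN (F : Type*) [Field F] (a b : F) : Prop := ∃ x y : F, x ^ 2 - a * y ^ 2 = b

lemma IsN.mul {F : Type*} [Field F] {a b b' : F} (h : IsN F a b) (h' : IsN F a b') :
    IsN F a (b * b') := by
  obtain ⟨x, y, rfl⟩ := h
  obtain ⟨z, w, rfl⟩ := h'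
  exact ⟨x * z + a * y * w, x * w + y * z, by ring⟩

lemma IsN.sq {F : Type*} [Field F] (a b : F) : IsN F a (b ^ 2) := ⟨b, 0, by ring⟩

lemma IsN.cancel_sq {F : Type*} [Field F] {a b k : F} (hk : k ≠ 0) (h : IsN F a (b * k ^ 2)) :
    IsN F a b := by
  have := h.mul (IsN.sq a k⁻¹)
  convert this using 1
  field_simp

lemma IsN.cancel {F : Type*} [Field F] {a b b' : F} (hb : b ≠ 0) (h : IsN F a b)
    (h' : IsN F a (b * b')) : IsN F a b' := by
  have := h.mul h'
  apply IsN.cancel_sq hb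
  convert this using 1
  ring

lemma IsN.left_sq {F : Type*} [Field F] {a b k : F} (hk : k ≠ 0) :
    IsN F (a * k ^ 2) b ↔ IsN F a b := by
  constructor
  · rintro ⟨x, y, h⟩
    exact ⟨x, k * y, by rw [← h]; ring⟩
  · rintro ⟨x, y, h⟩
    exact ⟨x, y / k, by rw [← h]; field_simp⟩

lemma IsN.of_sq {F : Type*} [Field F] {k : F} (h2 : (2 : F) ≠ 0) (hk : k ≠ 0) (b : F) :
    IsN F (k ^ 2) b := by
  refine ⟨(b + 1) / 2, (b - 1) / (2 * k), ?_⟩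
  field_simp
  ring

lemma IsN.symm {F : Type*} [Field F] {a b : F} (h2 : (2 : F) ≠ 0) (hb : b ≠ 0)
    (h : IsN F a b) : IsN F b a := by
  obtain ⟨x, y, h⟩ := h
  by_cases hy : y = 0
  · subst hy
    have : b = x ^ 2 := by rw [← h]; ring
    subst this
    exact IsN.of_sq h2 (by rintro rfl; simp at hb) a
  · refine ⟨x / y, 1 / y, ?_⟩
    rw [← h]
    field_simp
    ring

section padic
variable {p : ℕ} [hp : Fact p.Prime]

/-- primitive solutions -/
lemma IsN.prim {a b : ℤ} (h : IsN ℚ_[p] a b) :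
    ∃ X Y Z : ℤ_[p], X ^ 2 - a * Y ^ 2 = b * Z ^ 2 ∧
      ¬ ((p : ℤ_[p]) ∣ X ∧ (p : ℤ_[p]) ∣ Y ∧ (p : ℤ_[p]) ∣ Z) := by
  obtain ⟨x, y, h⟩ := h
  obtain ⟨w, hw, hx, hy, h1, hor⟩ : ∃ w : ℚ_[p], w ≠ 0 ∧ ‖x‖ ≤ ‖w‖ ∧ ‖y‖ ≤ ‖w‖ ∧ ‖(1:ℚ_[p])‖ ≤ ‖w‖ ∧
      (w = x ∨ w = y ∨ w = 1) := by
    rcases le_total ‖x‖ ‖y‖ with h1 | h1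
    · rcases le_total ‖y‖ ‖(1:ℚ_[p])‖ with h2 | h2
      · exact ⟨1, one_ne_zero, h1.trans h2, h2, le_rfl, by simp⟩
      · refine ⟨y, ?_, h1, le_rfl, h2, by simp⟩
        rintro rfl
        simp at h2
        linarith
    · rcases le_total ‖x‖ ‖(1:ℚ_[p])‖ with h2 | h2
      · exact ⟨1, one_ne_zero, h2, h1.trans h2, le_rfl, by simp⟩
      · refine ⟨x, ?_, le_rfl, h1, h2, by simp⟩
        rintro rfl
        simp at h2
        linarith
  have hw' : 0 < ‖w‖ := norm_pos_iff.2 hw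
  have key : ∀ z : ℚ_[p], ‖z‖ ≤ ‖w‖ → ‖z / w‖ ≤ 1 := by
    intro z hz
    rw [norm_div]
    exact div_le_one_of_le₀ hz hw'.le
  refine ⟨⟨x / w, key _ hx⟩, ⟨y / w, key _ hy⟩, ⟨1 / w, key _ h1⟩, ?_, ?_⟩
  · apply Subtype.ext
    change (x / w) ^ 2 - ((a : ℤ_[p]) : ℚ_[p]) * (y / w) ^ 2 = ((b : ℤ_[p]) : ℚ_[p]) * (1 / w) ^ 2
    rw [PadicInt.coe_intCast, PadicInt.coe_intCast, ← h]
    field_simp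
  · have hu : ∀ z : ℚ_[p], ∀ hz : ‖z‖ ≤ 1, z = 1 → ¬ ((p : ℤ_[p]) ∣ ⟨z, hz⟩) := by
      rintro z hz rfl hdv
      exact PadicInt.prime_p.not_dvd_one hdv
    rintro ⟨h1, h2, h3⟩
    rcases hor with rfl | rfl | rfl
    · exact hu _ _ (div_self hw) h1
    · exact hu _ _ (div_self hw) h2
    · exact hu _ _ (div_self hw) h3

lemma dvd_iff_toZMod (x : ℤ_[p]) : (p : ℤ_[p]) ∣ x ↔ PadicInt.toZMod x = 0 := by
  rw [← RingHom.mem_ker, PadicInt.ker_toZMod, PadicInt.maximalIdeal_eq_span_p,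
    Ideal.mem_span_singleton]

lemma dvd_int_iff (a : ℤ) : (p : ℤ_[p]) ∣ (a : ℤ_[p]) ↔ (p : ℤ) ∣ a := by
  rw [dvd_iff_toZMod, map_intCast, ZMod.intCast_zmod_eq_zero_iff_dvd]

/-- read off a square -/
lemma isSquare_of_dvd {a : ℤ} {X Y : ℤ_[p]} (hY : ¬ (p : ℤ_[p]) ∣ Y)
    (h : (p : ℤ_[p]) ∣ X ^ 2 - a * Y ^ 2) : IsSquare (a : ZMod p) := by
  rw [dvd_iff_toZMod] at h hY
  simp only [map_sub, map_pow, map_mul, map_intCast] at h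
  refine ⟨PadicInt.toZMod X / PadicInt.toZMod Y, ?_⟩
  field_simp
  linear_combination -h

/-- Hensel -/
lemma isSquare_padic (hp2 : p ≠ 2) {a : ℤ} (ha : ¬ (p : ℤ) ∣ a) (h : IsSquare (a : ZMod p)) :
    ∃ w : ℚ_[p], w ≠ 0 ∧ w ^ 2 = a := by
  obtain ⟨r, hr⟩ := h
  have hr' : ((r.val : ℤ) : ZMod p) = r := by simp
  have hdv : (p : ℤ) ∣ (r.val : ℤ) ^ 2 - a := by
    rw [← ZMod.intCast_zmod_eq_zero_iff_dvd]
    push_cast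
    simp [hr, pow_two]
  have hdr : ¬ (p : ℤ) ∣ 2 * (r.val : ℤ) := by
    intro h
    rcases (Nat.prime_iff_prime_int.1 hp.out).dvd_or_dvd h with h | h
    · have := (Nat.prime_dvd_prime_iff_eq hp.out Nat.prime_two).1 (by exact_mod_cast h)
      exact hp2 this
    · exact ha ((dvd_sub_right (dvd_pow h two_ne_zero)).1 hdv)
  let F : Polynomial ℤ_[p] := Polynomial.X ^ 2 - Polynomial.C (a : ℤ_[p])
  have hF : ∀ z : ℤ_[p], F.aeval z = z ^ 2 - a := by intro z; simp [F]
  have hF' : ∀ z : ℤ_[p], F.derivative.aeval z = 2 * z := by intro z; simp [F, one_add_one_eq_two]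
  have := hensels_lemma (p := p) (F := F) (a := ((r.val : ℤ) : ℤ_[p])) (by
    rw [hF, hF']
    have h1 : ‖(2 : ℤ_[p]) * ((r.val : ℤ) : ℤ_[p])‖ = 1 := by
      have h3 := PadicInt.norm_intCast_lt_one_iff (p := p) (z := 2 * (r.val : ℤ))
      have h4 := PadicInt.norm_le_one (p := p) (((2 * (r.val : ℤ) : ℤ)) : ℤ_[p])
      by_contra hne
      apply hdr
      rw [← h3]
      push_cast at h4 ⊢
      exact lt_of_le_of_ne h4 (by simpa using hne)
    rw [h1]
    have h3 := (PadicInt.norm_intCast_lt_one_iff (p := p) (z := (r.val : ℤ) ^ 2 - a)).2 hdv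
    push_cast at h3
    simpa using h3)
  obtain ⟨z, hz, -⟩ := this
  rw [hF] at hz
  have hz' : (z : ℚ_[p]) ^ 2 = a := by
    have : z ^ 2 = (a : ℤ_[p]) := by linear_combination hz
    have := congrArg (Subtype.val) this
    push_cast at this
    exact this
  refine ⟨z, ?_, hz'⟩
  intro h0
  rw [h0] at hz'
  apply ha
  have : (a : ℚ_[p]) = 0 := by rw [← hz']; simp
  have : a = 0 := by exact_mod_cast this
  simp [this]

lemma IsN.units (hp2 : p ≠ 2) {a b : ℤ} (ha : ¬ (p : ℤ) ∣ a) (hb : ¬ (p : ℤ) ∣ b) :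
    IsN ℚ_[p] a b := by
  have ha' : (a : ZMod p) ≠ 0 := by rwa [Ne, ZMod.intCast_zmod_eq_zero_iff_dvd]
  have hb' : (b : ZMod p) ≠ 0 := by rwa [Ne, ZMod.intCast_zmod_eq_zero_iff_dvd]
  obtain ⟨x, y, hxy⟩ : ∃ x y : ZMod p, x ^ 2 - a * y ^ 2 = b := by
    open Polynomial in
    obtain ⟨x, y, h⟩ := FiniteField.exists_root_sum_quadratic (R := ZMod p)
      (f := X ^ 2 - C (b : ZMod p)) (g := C (-(a : ZMod p)) * X ^ 2)
      (by compute_degree!) (by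
        rw [degree_C_mul_X_pow _ (neg_ne_zero.2 ha')]; rfl) (by
        rw [ZMod.card]; exact hp.out.mod_two_eq_one_iff_ne_two.2 hp2)
    refine ⟨x, y, ?_⟩
    simp at h
    linear_combination h
  have hx' : (((x.val : ℤ)) : ZMod p) = x := by simp
  have hy' : (((y.val : ℤ)) : ZMod p) = y := by simp
  by_cases hx : x = 0
  · -- a * y^2 = -b
    obtain ⟨w, hw, hwe⟩ := isSquare_padic (p := p) hp2 (a := -(a * b)) (by
      rw [dvd_neg]
      intro h
      exact ((Nat.prime_iff_prime_int.1 hp.out).dvd_or_dvd h).elim ha hb) ⟨a * y, by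
        push_cast
        rw [← hxy, hx]; ring⟩
    have ha0 : (a : ℚ_[p]) ≠ 0 := by
      intro h
      apply ha
      have : a = 0 := by exact_mod_cast h
      simp [this]
    refine ⟨0, w / a, ?_⟩
    field_simp
    rw [hwe]; push_cast; ring
  · obtain ⟨w, hw, hwe⟩ := isSquare_padic (p := p) hp2 (a := b + a * (y.val : ℤ) ^ 2) (by
      rw [← ZMod.intCast_zmod_eq_zero_iff_dvd]
      push_cast
      simp only [ZMod.natCast_val, ZMod.cast_id', id]
      rw [← hxy]
      simpa using hx) ⟨x, by
        push_cast
        simp only [ZMod.natCast_val, ZMod.cast_id', id]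
        rw [← hxy]; ring⟩
    refine ⟨w, ((y.val : ℤ) : ℚ_[p]), ?_⟩
    rw [hwe]
    push_cast
    ring

/-- if `p ∥ b` then `a` is a square mod `p`. -/
lemma IsN.isSquare_mod {a b : ℤ} (hb : (p : ℤ) ∣ b) (hb2 : ¬ (p : ℤ) ^ 2 ∣ b)
    (h : IsN ℚ_[p] a b) : IsSquare (a : ZMod p) := by
  by_cases ha : (p : ℤ) ∣ a
  · rw [(ZMod.intCast_zmod_eq_zero_iff_dvd a p).2 ha]
    exact ⟨0, by simp⟩
  obtain ⟨X, Y, Z, h, hpr⟩ := h.prim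
  obtain ⟨b', rfl⟩ := hb
  have hb' : ¬ (p : ℤ) ∣ b' := fun ⟨k, hk⟩ => hb2 ⟨k, by rw [hk]; ring⟩
  have P := PadicInt.prime_p (p := p)
  have hY : ¬ (p : ℤ_[p]) ∣ Y := by
    intro hY
    obtain ⟨y, rfl⟩ := hY
    have hX : (p : ℤ_[p]) ∣ X := by
      apply P.dvd_of_dvd_pow (n := 2)
      refine ⟨a * p * y ^ 2 + b' * Z ^ 2, ?_⟩
      push_cast at h
      linear_combination h
    obtain ⟨x, rfl⟩ := hX
    refine hpr ⟨dvd_mul_right _ _, dvd_mul_right _ _, ?_⟩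
    have h2 : (p : ℤ_[p]) ∣ (b' : ℤ_[p]) * Z ^ 2 := by
      refine ⟨x ^ 2 - a * y ^ 2, ?_⟩
      apply mul_left_cancel₀ P.ne_zero
      push_cast at h
      linear_combination -h
    rcases P.dvd_or_dvd h2 with h2 | h2
    · exact absurd ((dvd_int_iff _).1 h2) hb'
    · exact P.dvd_of_dvd_pow h2
  apply isSquare_of_dvd hY (X := X)
  rw [h]
  exact ⟨b' * Z ^ 2, by push_cast; ring⟩

end padic


lemma exists_sqrt_mod (a : ℤ) (n : ℕ) (hn : Squarefree n)
    (h : ∀ p : ℕ, p.Prime → p ∣ n → ∃ t : ℤ, (p : ℤ) ∣ t ^ 2 - a) : ∃ t : ℤ, (n : ℤ) ∣ t ^ 2 - a := by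
  induction n using Nat.recOnMul with
  | zero => simp at hn
  | one => exact ⟨0, by simp⟩
  | prime p hp => exact h p hp dvd_rfl
  | mul m n hm hn' =>
    have hc := Nat.squarefree_mul_iff.1 hn
    obtain ⟨s, hs⟩ := hm hc.2.1 (fun p hp hd => h p hp (hd.mul_right n))
    obtain ⟨t, ht⟩ := hn' hc.2.2 (fun p hp hd => h p hp (hd.mul_left m))
    have hcop : IsCoprime (m : ℤ) n := Nat.isCoprime_iff_coprime.2 hc.1
    obtain ⟨u, v, huv⟩ := hcop
    refine ⟨t * u * m + s * v * n, ?_⟩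
    push_cast
    apply IsCoprime.mul_dvd (⟨u, v, huv⟩)
    · have : (t * u * m + s * v * n) ^ 2 - a =
        (s ^ 2 - a) + m * ((t - s) * u * (t * u * m + s * v * n + s)) := by
        have : v * n = 1 - u * m := by linear_combination huv
        rw [show t * u * m + s * v * n = s + (t - s) * u * m by linear_combination s * huv]
        ring
      rw [this]
      exact dvd_add hs (dvd_mul_right _ _)
    · have : (t * u * m + s * v * n) ^ 2 - a =
        (t ^ 2 - a) + n * ((s - t) * v * (t * u * m + s * v * n + t)) := by
        rw [show t * u * m + s * v * n = t + (s - t) * v * n by linear_combination t * huv]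
        ring
      rw [this]
      exact dvd_add ht (dvd_mul_right _ _)

lemma int_sqfree_decomp (q : ℤ) (hq : q ≠ 0) :
    ∃ A k : ℤ, Squarefree A ∧ k ≠ 0 ∧ q = A * k ^ 2 := by
  obtain ⟨A, k, h, hA⟩ := Nat.sq_mul_squarefree q.natAbs
  have hk : k ≠ 0 := by
    rintro rfl
    simp at h
    omega
  rcases Int.natAbs_eq q with h' | h'
  · refine ⟨A, k, Int.squarefree_natCast.2 hA, by exact_mod_cast hk, ?_⟩
    rw [h', ← h]; push_cast; ring
  · refine ⟨-A, k, ?_, by exact_mod_cast hk, ?_⟩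
    · rw [← Int.squarefree_natAbs]
      simpa using hA
    · rw [h', ← h]; push_cast; ring

theorem hasse_aux (N : ℕ) : ∀ a b : ℤ, a.natAbs + b.natAbs ≤ N → Squarefree a → Squarefree b →
    ¬ (a < 0 ∧ b < 0) → (∀ (p : ℕ) [Fact p.Prime], p ≠ 2 → IsN ℚ_[p] a b) → IsN ℚ a b := by
  induction N with
  | zero =>
    intro a b h ha
    have : a = 0 := by omega
    simp [this] at ha
  | succ N ih =>
    suffices H : ∀ a b : ℤ, a.natAbs ≤ b.natAbs → a.natAbs + b.natAbs ≤ N + 1 → Squarefree a →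
        Squarefree b →
        ¬ (a < 0 ∧ b < 0) → (∀ (p : ℕ) [Fact p.Prime], p ≠ 2 → IsN ℚ_[p] a b) → IsN ℚ a b by
      intro a b hN ha hb hs hloc
      rcases le_total a.natAbs b.natAbs with h | h
      · exact H a b h hN ha hb hs hloc
      · apply IsN.symm two_ne_zero (by exact_mod_cast ha.ne_zero)
        apply H b a h (by omega) hb ha (by tauto)
        intro p _ hp2
        exact IsN.symm two_ne_zero (by exact_mod_cast hb.ne_zero) (hloc p hp2)
    intro a b hab hN ha hb hs hloc
    have ha0 := ha.ne_zero
    have hb0 := hb.ne_zero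
    by_cases hb1 : b.natAbs = 1
    · rcases Int.natAbs_eq b with h | h
      · rw [h, hb1]
        simpa using IsN.sq (a : ℚ) 1
      · have : a = 1 := by omega
        subst this
        simpa using IsN.of_sq (k := (1:ℚ)) two_ne_zero one_ne_zero (b : ℚ)
    have hb2 : 2 ≤ b.natAbs := by omega
    obtain ⟨t, ht⟩ := exists_sqrt_mod a b.natAbs (Int.squarefree_natAbs.2 hb) (by
      intro p hp hpb
      by_cases hp2 : p = 2
      · subst hp2
        refine ⟨a, ?_⟩
        rcases Int.even_or_odd a with ⟨k, hk⟩ | ⟨k, hk⟩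
        · exact ⟨2 * k ^ 2 - k, by subst hk; push_cast; ring⟩
        · exact ⟨2 * k ^ 2 + k, by subst hk; push_cast; ring⟩
      · have : Fact p.Prime := ⟨hp⟩
        have hpb' : (p : ℤ) ∣ b := Int.natCast_dvd.2 hpb
        obtain ⟨r, hr⟩ := IsN.isSquare_mod hpb' (fun h => by
          have := hb p (by rwa [pow_two] at h)
          exact (Nat.prime_iff_prime_int.1 hp).not_isUnit this) (hloc p hp2)
        refine ⟨r.val, ?_⟩
        rw [← ZMod.intCast_zmod_eq_zero_iff_dvd]
        push_cast
        simp [hr, pow_two])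
    rw [Int.natCast_natAbs, abs_dvd] at ht
    -- reduce t
    obtain ⟨t, ht, htb⟩ : ∃ t : ℤ, b ∣ t ^ 2 - a ∧ 2 * |t| ≤ |b| := by
      refine ⟨Int.bmod t b.natAbs, ?_, ?_⟩
      · have h1 : (b.natAbs : ℤ) ∣ Int.bmod t b.natAbs - t := by
          rw [Int.bmod_eq_self_sub_mul_bdiv]
          exact ⟨-(t.bdiv b.natAbs), by ring⟩
        rw [Int.natCast_natAbs, abs_dvd] at h1
        have : (Int.bmod t b.natAbs) ^ 2 - a =
          (Int.bmod t b.natAbs - t) * (Int.bmod t b.natAbs + t) + (t ^ 2 - a) := by ring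
        rw [this]
        exact dvd_add (h1.mul_right _) ht
      · have h1 := Int.bmod_lt (x := t) (m := b.natAbs) (by omega)
        have h2 := Int.le_bmod (x := t) (m := b.natAbs) (by omega)
        rw [← Int.natCast_natAbs b]
        rcases abs_cases (t.bmod b.natAbs) with h | h <;> omega
    obtain ⟨q, hq⟩ := ht
    by_cases hq0 : q = 0
    · have : a = t ^ 2 := by rw [hq0] at hq; linarith
      have ht0 : t ≠ 0 := by rintro rfl; simp at this; exact ha0 this
      rw [this]
      push_cast
      exact IsN.of_sq two_ne_zero (by exact_mod_cast ht0) _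
    obtain ⟨A, k, hA, hk, hqA⟩ := int_sqfree_decomp q hq0
    have hkabs : 1 ≤ k ^ 2 := by
      have : 0 < k ^ 2 := by positivity
      omega
    have hAq : |A| ≤ |q| := by
      rw [hqA, abs_mul, abs_of_pos (by omega : 0 < k ^ 2)]
      nlinarith [abs_nonneg A]
    have hqb : |q| < |b| := by
      have h1 : |b| * |q| ≤ t ^ 2 + |a| := by
        rw [← abs_mul, ← hq]
        calc |t ^ 2 - a| ≤ |t ^ 2| + |a| := abs_sub _ _
          _ = _ := by rw [abs_of_nonneg (sq_nonneg t)]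
      have h2 : |a| ≤ |b| := by rw [← Int.natCast_natAbs, ← Int.natCast_natAbs]; exact_mod_cast hab
      have h3 : 2 ≤ |b| := by rw [← Int.natCast_natAbs]; exact_mod_cast hb2
      have h4 : 4 * t ^ 2 ≤ |b| ^ 2 := by
        have := abs_nonneg t
        rw [← sq_abs t]
        nlinarith
      by_contra hcon
      push Not at hcon
      nlinarith
    have hb' : (b : ℚ) ≠ 0 := by exact_mod_cast hb0
    have hA0 : (A : ℚ) ≠ 0 := by exact_mod_cast hA.ne_zero
    have hk0 : (k : ℚ) ≠ 0 := by exact_mod_cast hk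
    have hIH : IsN ℚ a A := by
      have hAb : A.natAbs < b.natAbs := by
        rw [← Int.natCast_natAbs, ← Int.natCast_natAbs] at *
        omega
      apply ih a A (by omega) ha hA
      · rintro ⟨h1, h2⟩
        have hbp : 0 < b := by
          rcases lt_or_gt_of_ne hb0 with h | h
          · exact absurd ⟨h1, h⟩ hs
          · exact h
        have : A * k ^ 2 < 0 := by nlinarith
        have : b * q < 0 := by rw [hqA]; nlinarith
        nlinarith [sq_nonneg t]
      · intro p _ hp2
        have hkp : (k : ℚ_[p]) ≠ 0 := by exact_mod_cast hk
        have hbp : (b : ℚ_[p]) ≠ 0 := by exact_mod_cast hb0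
        apply IsN.cancel_sq hkp
        apply IsN.cancel hbp (hloc p hp2)
        refine ⟨t, 1, ?_⟩
        rw [hqA] at hq
        have : (t : ℚ_[p]) ^ 2 - a = b * (A * k ^ 2) := by exact_mod_cast hq
        rw [← this]; ring
    apply IsN.cancel (b := (A : ℚ) * k ^ 2) (by positivity) (hIH.mul (IsN.sq _ _))
    refine ⟨t, 1, ?_⟩
    rw [hqA] at hq
    have : (t : ℚ) ^ 2 - a = b * (A * k ^ 2) := by exact_mod_cast hq
    linear_combination this

theorem hasse (a b : ℤ) (ha : Squarefree a) (hb : Squarefree b)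
    (hs : ¬ (a < 0 ∧ b < 0)) (h : ∀ (p : ℕ) [Fact p.Prime], p ≠ 2 → IsN ℚ_[p] a b) : IsN ℚ a b :=
  hasse_aux _ a b le_rfl ha hb hs h

open NumberField

section nf
variable (K : Type) [Field K] [NumberField K]

lemma lin_pair {K : Type} [Field K] [NumberField K] {x : K} (hx : x ∉ Set.range (algebraMap ℚ K)) :
    LinearIndependent ℚ ![1, x] := by
  rw [LinearIndependent.pair_iff]
  intro s t h
  have ht : t = 0 := by
    by_contra ht
    apply hx
    refine ⟨-s / t, ?_⟩
    rw [Algebra.smul_def, Algebra.smul_def] at h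
    have : algebraMap ℚ K t ≠ 0 := by simpa using ht
    rw [map_div₀, map_neg]
    field_simp
    linear_combination -h
  subst ht
  simpa using h

lemma lin_pair' {K : Type} [Field K] [NumberField K] {x : K}
    (hx : x ∉ Set.range (algebraMap ℚ K)) (s t : ℚ) (h : (s : K) + t * x = 0) : s = 0 ∧ t = 0 := by
  have ht : t = 0 := by
    by_contra ht
    apply hx
    refine ⟨-s / t, ?_⟩
    have : (t : K) ≠ 0 := by exact_mod_cast ht
    simp only [eq_ratCast]
    push_cast
    field_simp
    linear_combination -h
  subst ht
  simpa using h

lemma exists_pair_basis {K : Type} [Field K] [NumberField K] (hdeg : Module.finrank ℚ K = 2)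
    {x : K} (hx : x ∉ Set.range (algebraMap ℚ K)) :
    ∃ b : Module.Basis (Fin 2) ℚ K, b 0 = 1 ∧ b 1 = x := by
  refine ⟨basisOfLinearIndependentOfCardEqFinrank (lin_pair hx) (by rw [hdeg]; rfl), ?_, ?_⟩ <;>
  rw [coe_basisOfLinearIndependentOfCardEqFinrank] <;> rfl

lemma exists_theta (hdeg : Module.finrank ℚ K = 2) :
    ∃ (θ : K) (m : ℤ), Squarefree m ∧ θ ^ 2 = m ∧ θ ∉ Set.range (algebraMap ℚ K) := by
  obtain ⟨x, hx⟩ : ∃ x : K, x ∉ Set.range (algebraMap ℚ K) := by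
    by_contra hcon
    push Not at hcon
    have : (⊥ : Subalgebra ℚ K) = ⊤ := by
      rw [eq_top_iff]
      intro x _
      exact Algebra.mem_bot.2 (hcon x)
    rw [Subalgebra.bot_eq_top_iff_finrank_eq_one] at this
    omega
  obtain ⟨b, hb0, hb1⟩ := exists_pair_basis hdeg hx
  have hb : ∀ z : K, ∃ u v : ℚ, z = u + v * x := by
    intro z
    refine ⟨b.repr z 0, b.repr z 1, ?_⟩
    conv_lhs => rw [← b.sum_repr z]
    simp [Fin.sum_univ_two, hb0, hb1, Algebra.smul_def]
  obtain ⟨u, v, hx2⟩ := hb (x ^ 2)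
  set r : ℚ := u + v ^ 2 / 4 with hr
  have hy : (x - v / 2) ^ 2 = (r : K) := by
    rw [hr]; push_cast
    linear_combination hx2
  have hyr : (x - v / 2) ∉ Set.range (algebraMap ℚ K) := by
    rintro ⟨q, hq⟩
    apply hx
    refine ⟨q + v / 2, ?_⟩
    simp only [eq_ratCast] at hq ⊢
    push_cast
    rw [hq]; ring
  have hr0 : r ≠ 0 := by
    intro h0
    rw [h0] at hy
    simp at hy
    apply hyr
    rw [hy]
    exact ⟨0, by simp⟩
  obtain ⟨m, k, hm, hk, hmk⟩ := int_sqfree_decomp (r.num * r.den) (by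
    simp [hr0])
  have hrm : r = m * (k / r.den) ^ 2 := by
    have : (r.num : ℚ) * r.den = m * k ^ 2 := by exact_mod_cast hmk
    have hd : (r.den : ℚ) ≠ 0 := by exact_mod_cast r.den_ne_zero
    rw [div_pow, ← mul_div_assoc, ← this]
    conv_lhs => rw [← Rat.num_div_den r]
    field_simp
  set s : ℚ := k / r.den with hs
  have hs0 : s ≠ 0 := by
    intro h; rw [h] at hrm; simp at hrm; exact hr0 hrm
  have hs0' : (s : K) ≠ 0 := by exact_mod_cast hs0
  refine ⟨(x - v / 2) / s, m, hm, ?_, ?_⟩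
  · rw [div_pow, hy, hrm]
    push_cast
    field_simp
  · rintro ⟨q, hq⟩
    apply hyr
    refine ⟨q * s, ?_⟩
    rw [map_mul, hq]
    simp only [eq_ratCast]
    field_simp

variable {K}

lemma trace_norm (hdeg : Module.finrank ℚ K = 2) {θ : K} {m : ℤ} (h2 : θ ^ 2 = m)
    (hθ : θ ∉ Set.range (algebraMap ℚ K)) (u v : ℚ) :
    Algebra.trace ℚ K (u + v * θ) = 2 * u ∧ Algebra.norm ℚ (u + v * θ : K) = u ^ 2 - m * v ^ 2 := by
  obtain ⟨b, hb0, hb1⟩ := exists_pair_basis hdeg hθ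
  have hrepr : ∀ u v : ℚ, b.repr (u + v * θ) 0 = u ∧ b.repr (u + v * θ) 1 = v := by
    intro u v
    have : (u + v * θ : K) = u • b 0 + v • b 1 := by
      rw [hb0, hb1]; simp [Algebra.smul_def]
    rw [this]
    simp
  have hM : Algebra.leftMulMatrix b (u + v * θ) = !![u, m * v; v, u] := by
    have e0 : (u + v * θ : K) * b 0 = u + v * θ := by rw [hb0, mul_one]
    have e1 : (u + v * θ : K) * b 1 = (m * v : ℚ) + u * θ := by
      rw [hb1]; push_cast; linear_combination v * h2
    ext i j
    rw [Algebra.leftMulMatrix_eq_repr_mul]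
    fin_cases i <;> fin_cases j <;> simp only [Fin.zero_eta, Fin.mk_one, Fin.isValue, e0, e1, hrepr] <;> simp
  rw [Algebra.trace_eq_matrix_trace b, Algebra.norm_eq_matrix_det b, hM]
  simp [Matrix.trace_fin_two, Matrix.det_fin_two]
  constructor <;> ring

lemma repr_theta (hdeg : Module.finrank ℚ K = 2) {θ : K}
    (hθ : θ ∉ Set.range (algebraMap ℚ K)) (z : K) : ∃ u v : ℚ, z = u + v * θ := by
  obtain ⟨b, hb0, hb1⟩ := exists_pair_basis hdeg hθ
  refine ⟨b.repr z 0, b.repr z 1, ?_⟩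
  conv_lhs => rw [← b.sum_repr z]
  simp [Fin.sum_univ_two, hb0, hb1, Algebra.smul_def]

theorem nf (hdeg : Module.finrank ℚ K = 2) (him : ∀ v : InfinitePlace K, v.IsComplex) :
    ∃ m : ℤ, Squarefree m ∧ m < 0 ∧ (discr K = m ∧ m % 4 = 1 ∨ discr K = 4 * m) ∧
      ∀ n : ℚ, n ≠ 0 → ((∃ x : K, x ≠ 0 ∧ Algebra.norm ℚ x = n) ↔ IsN ℚ m n) := by
  obtain ⟨θ, m, hm, h2, hθ⟩ := exists_theta K hdeg
  have htn := trace_norm hdeg h2 hθ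
  have hneg : discr K < 0 := by
    have h := sign_discr K
    have htc : IsTotallyComplex K := ⟨him⟩
    have h3 := IsTotallyComplex.finrank K
    have h1 : InfinitePlace.nrComplexPlaces K = 1 := by omega
    rw [h1] at h
    simpa using h
  have hcard : Fintype.card (Module.Free.ChooseBasisIndex ℤ (𝓞 K)) = 2 := by
    rw [← Module.finrank_eq_card_chooseBasisIndex, RingOfIntegers.rank, hdeg]
  obtain ⟨b⟩ : Nonempty (Module.Basis (Fin 2) ℤ (𝓞 K)) :=
    ⟨(RingOfIntegers.basis K).reindex (Fintype.equivFinOfCardEq hcard)⟩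
  have hθi : IsIntegral ℤ θ := by
    refine IsIntegral.of_pow (n := 2) two_pos ?_
    rw [h2]
    exact isIntegral_algebraMap (R := ℤ) (x := m)
  obtain ⟨Θ, hΘ⟩ : ∃ Θ : 𝓞 K, algebraMap (𝓞 K) K Θ = θ := ⟨⟨θ, hθi⟩, rfl⟩
  have htr : ∀ z : 𝓞 K, (Algebra.trace ℤ (𝓞 K) z : ℚ) = Algebra.trace ℚ K (algebraMap (𝓞 K) K z) := by
    intro z
    exact Algebra.coe_trace_int z
  have hnm : ∀ z : 𝓞 K, (Algebra.norm ℤ z : ℚ) = Algebra.norm ℚ (algebraMap (𝓞 K) K z) := by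
    intro z
    exact Algebra.coe_norm_int z
  obtain ⟨u0, v0, hb0⟩ := repr_theta hdeg hθ (algebraMap (𝓞 K) K (b 0))
  obtain ⟨u1, v1, hb1⟩ := repr_theta hdeg hθ (algebraMap (𝓞 K) K (b 1))
  have hD : (discr K : ℚ) = 4 * m * (u0 * v1 - u1 * v0) ^ 2 := by
    rw [← discr_eq_discr K b, Algebra.discr_def, Matrix.det_fin_two]
    simp only [Algebra.traceMatrix_apply, Algebra.traceForm_apply]
    push_cast
    rw [htr, htr, htr, htr]
    simp only [map_mul]
    rw [hb0, hb1]
    have e : ∀ a b c d : ℚ, Algebra.trace ℚ K ((a + b * θ) * (c + d * θ)) = 2 * (a * c + m * b * d) := by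
      intro a b c d
      rw [← (htn (a * c + m * b * d) (a * d + b * c)).1]
      congr 1
      push_cast
      linear_combination (b : K) * d * h2
    rw [e, e, e, e]
    ring
  -- the index
  obtain ⟨k, hk⟩ : ∃ k : ℤ, (k : ℚ) * (u0 * v1 - u1 * v0) = 1 := by
    have r1 := b.sum_repr 1
    have r2 := b.sum_repr Θ
    rw [Fin.sum_univ_two] at r1 r2
    generalize b.repr 1 0 = α at r1
    generalize b.repr 1 1 = β at r1
    generalize b.repr Θ 0 = γ at r2
    generalize b.repr Θ 1 = δ at r2
    have r1' := congrArg (algebraMap (𝓞 K) K) r1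
    have r2' := congrArg (algebraMap (𝓞 K) K) r2
    simp only [map_add, zsmul_eq_mul, map_mul, map_intCast, map_one] at r1' r2'
    rw [hΘ] at r2'
    rw [hb0, hb1] at r1' r2'
    have hli := lin_pair' hθ
    have q1 := hli (α * u0 + β * u1 - 1) (α * v0 + β * v1) (by
      push_cast
      linear_combination r1')
    have q2 := hli (γ * u0 + δ * u1) (γ * v0 + δ * v1 - 1) (by
      push_cast
      linear_combination r2')
    refine ⟨α * δ - β * γ, ?_⟩
    push_cast
    obtain ⟨q1a, q1b⟩ := q1
    obtain ⟨q2a, q2b⟩ := q2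
    linear_combination (γ * v0 + δ * v1 : ℚ) * q1a + q2b - q1b * (γ * u0 + δ * u1 : ℚ)
  have hDk : discr K * k ^ 2 = 4 * m := by
    have : (discr K : ℚ) * k ^ 2 = 4 * m := by
      rw [hD]
      linear_combination (4 * m * (k * (u0 * v1 - u1 * v0) + 1) : ℚ) * hk
    exact_mod_cast this
  have hk0 : k ≠ 0 := by rintro rfl; simp at hk
  have hm0 : m < 0 := by
    have : 0 < k ^ 2 := by positivity
    nlinarith
  refine ⟨m, hm, hm0, ?_, ?_⟩
  · -- k = ± 1 or ± 2
    have hk12 : k ^ 2 = 1 ∨ k ^ 2 = 4 := by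
      rcases Int.even_or_odd' k with ⟨l, hl | hl⟩
      · right
        have : l * l ∣ m := by
          refine ⟨discr K, ?_⟩
          rw [hl] at hDk
          linarith
        have := hm l this
        rcases Int.isUnit_iff.1 this with h | h <;> rw [hl, h] <;> norm_num
      · left
        have hc : IsCoprime (k * k) 4 := by
          have : IsCoprime k 2 := ⟨1, -l, by rw [hl]; ring⟩
          have h3 : IsCoprime (k * k) (2 * 2) :=
            IsCoprime.mul_left (IsCoprime.mul_right this this) (IsCoprime.mul_right this this)
          exact h3
        have : k * k ∣ m := hc.dvd_of_dvd_mul_left ⟨discr K, by linarith⟩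
        have := hm k this
        rcases Int.isUnit_iff.1 this with h | h <;> rw [h] <;> norm_num
    rcases hk12 with h | h
    · right; rw [h] at hDk; linarith
    · left
      have hDm : discr K = m := by rw [h] at hDk; linarith
      refine ⟨hDm, ?_⟩
      -- integrality data
      have key : ∀ z : 𝓞 K, ∀ u v : ℚ, algebraMap (𝓞 K) K z = u + v * θ →
          ∃ s w n : ℤ, 2 * u = s ∧ 2 * v = w ∧ s ^ 2 - m * w ^ 2 = 4 * n := by
        intro z u v hz
        have t1 := htr z
        rw [hz, (htn u v).1] at t1
        have t2 := htr (z * Θ)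
        have : algebraMap (𝓞 K) K (z * Θ) = ((m * v : ℚ) : K) + u * θ := by
          rw [map_mul, hz]
          rw [hΘ]
          push_cast
          linear_combination (v : K) * h2
        rw [this, (htn _ _).1] at t2
        have t3 := hnm z
        rw [hz, (htn u v).2] at t3
        set s := Algebra.trace ℤ (𝓞 K) z
        set y := Algebra.trace ℤ (𝓞 K) (z * Θ)
        set n := Algebra.norm ℤ z
        have hmQ : (m : ℚ) ≠ 0 := by exact_mod_cast hm0.ne
        have e1 : m * s ^ 2 - y ^ 2 = 4 * m * n := by
          have : (m : ℚ) * s ^ 2 - y ^ 2 = 4 * m * n := by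
            rw [t1, t2, t3]; ring
          exact_mod_cast this
        have : m ∣ y := by
          apply (hm.dvd_pow_iff_dvd (n := 2) two_ne_zero).1
          exact ⟨s ^ 2 - 4 * n, by linarith⟩
        obtain ⟨w, hw⟩ := this
        refine ⟨s, w, n, t1.symm, ?_, ?_⟩
        · rw [hw] at t2
          push_cast at t2
          apply mul_left_cancel₀ hmQ
          linarith
        · rw [hw] at e1
          apply mul_left_cancel₀ hm0.ne
          linarith
      obtain ⟨s0, w0, n0, a0, a1, a2⟩ := key _ _ _ hb0
      obtain ⟨s1, w1, n1, c0, c1, c2⟩ := key _ _ _ hb1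
      have hsw : k * (s0 * w1 - s1 * w0) = 4 := by
        have : (k : ℚ) * (s0 * w1 - s1 * w0) = 4 := by
          rw [← a0, ← a1, ← c0, ← c1]; linear_combination 4 * hk
        exact_mod_cast this
      have m4 : ¬ (4 : ℤ) ∣ m := by
        intro h4
        have := hm 2 (by simpa using h4)
        rw [Int.isUnit_iff] at this
        omega
      have hodd : ∀ s w n : ℤ, s ^ 2 - m * w ^ 2 = 4 * n → Odd w → m % 4 = 1 := by
        intro s w n hh hw
        obtain ⟨l, hl⟩ := hw
        have : s ^ 2 - m = 4 * (n + m * (l ^ 2 + l)) := by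
          rw [hl] at hh; linear_combination hh
        rcases Int.even_or_odd' s with ⟨j, hj | hj⟩
        · exact absurd ⟨j ^ 2 - (n + m * (l ^ 2 + l)), by rw [hj] at this; linarith⟩ m4
        · have : m = 1 + 4 * (j ^ 2 + j - (n + m * (l ^ 2 + l))) := by rw [hj] at this; linarith
          omega
      have heven : ∀ s w n : ℤ, s ^ 2 - m * w ^ 2 = 4 * n → Even w → Even s := by
        intro s w n hh hw
        have : Even (s ^ 2) := by
          have : s ^ 2 = 4 * n + m * w ^ 2 := by linarith
          rw [this]
          apply Even.add
          · exact ⟨2 * n, by ring⟩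
          · exact Even.mul_left (hw.pow_of_ne_zero two_ne_zero) m
        exact (Int.even_pow.1 this).1
      rcases Int.even_or_odd w0 with e0 | o0
      · rcases Int.even_or_odd w1 with e1 | o1
        · exfalso
          obtain ⟨x1, hx1⟩ := heven _ _ _ a2 e0
          obtain ⟨x2, hx2⟩ := heven _ _ _ c2 e1
          obtain ⟨x3, hx3⟩ := e0
          obtain ⟨x4, hx4⟩ := e1
          have : k * (x1 * x4 - x2 * x3) = 1 := by
            rw [hx1, hx2, hx3, hx4] at hsw
            linarith
          have : IsUnit k := IsUnit.of_mul_eq_one _ this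
          rcases Int.isUnit_iff.1 this with h' | h' <;> rw [h'] at h <;> norm_num at h
        · exact hodd _ _ _ c2 o1
      · exact hodd _ _ _ a2 o0
  · intro n hn
    constructor
    · rintro ⟨x, hx, hxn⟩
      obtain ⟨u, v, rfl⟩ := repr_theta hdeg hθ x
      refine ⟨u, v, ?_⟩
      rw [← hxn, (htn u v).2]
    · rintro ⟨u, v, h⟩
      refine ⟨u + v * θ, ?_, ?_⟩
      · intro h0
        have := (htn u v).2
        rw [h0, h] at this
        rw [Algebra.norm_zero] at this
        exact hn this.symm
      · rw [(htn u v).2, h]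

end nf


section core
open NumberTheorySymbols

/-- local unit controlling solvability at `p ∣ D` -/
def uu (D : ℤ) (d c p : ℕ) : ℤ := if p ∣ d then -(D / p) * ((d / p : ℕ) : ℤ) * c else d * c

lemma aLeg_eq_zero_iff (a : ℤ) (p : ℕ) : aLeg a p = 0 ↔ IsSquare (a : ZMod p) := by
  unfold aLeg
  split_ifs with h <;> simp [h]

lemma aLeg_mul {p : ℕ} (hp : p.Prime) {a b : ℤ} (ha : ¬ (p : ℤ) ∣ a)
    (hb : ¬ (p : ℤ) ∣ b) : aLeg (a * b) p = aLeg a p + aLeg b p := by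
  have : Fact p.Prime := ⟨hp⟩
  have ha' : (a : ZMod p) ≠ 0 := by rwa [Ne, ZMod.intCast_zmod_eq_zero_iff_dvd]
  have hb' : (b : ZMod p) ≠ 0 := by rwa [Ne, ZMod.intCast_zmod_eq_zero_iff_dvd]
  have hab' : ((a * b : ℤ) : ZMod p) ≠ 0 := by push_cast; exact mul_ne_zero ha' hb'
  have hm := legendreSym.mul p a b
  have key : ∀ z : ℤ, (z : ZMod p) ≠ 0 →
      (aLeg z p = 0 ∧ legendreSym p z = 1) ∨ (aLeg z p = 1 ∧ legendreSym p z = -1) := by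
    intro z hz
    unfold aLeg
    split_ifs with h
    · exact Or.inl ⟨rfl, (legendreSym.eq_one_iff p hz).2 h⟩
    · exact Or.inr ⟨rfl, (legendreSym.eq_neg_one_iff p).2 h⟩
  rcases key a ha' with ⟨h1, h2⟩ | ⟨h1, h2⟩ <;> rcases key b hb' with ⟨h3, h4⟩ | ⟨h3, h4⟩ <;>
  rcases key _ hab' with ⟨h5, h6⟩ | ⟨h5, h6⟩ <;> rw [h2, h4, h6] at hm <;>
  first | (norm_num at hm; done) | (rw [h1, h3, h5]; rfl)

lemma ediv_star (D : ℤ) (p : ℕ) :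
    D / ((-1) ^ ((p - 1) / 2) * (p : ℤ)) = (-1) ^ ((p - 1) / 2) * (D / p) := by
  rcases neg_one_pow_eq_or ℤ ((p - 1) / 2) with h | h <;> rw [h] <;> simp

lemma aLeg_star {p : ℕ} (hp : p.Prime) (hp2 : p ≠ 2) (D : ℤ) :
    aLeg (D / ((-1) ^ ((p - 1) / 2) * (p : ℤ))) p = aLeg (-(D / p)) p := by
  have : Fact p.Prime := ⟨hp⟩
  rw [ediv_star]
  have hodd := hp.eq_two_or_odd.resolve_left hp2
  have h4 : p % 4 = 1 ∨ p % 4 = 3 := by omega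
  rcases h4 with h4 | h4
  · have : Even ((p - 1) / 2) := by rw [Nat.even_iff]; omega
    rw [this.neg_one_pow, one_mul]
    obtain ⟨i, hi⟩ := (ZMod.exists_sq_eq_neg_one_iff (p := p)).2 (by omega)
    unfold aLeg
    congr 1
    apply propext
    push_cast
    have hi0 : i ≠ 0 := by rintro rfl; simp at hi
    constructor
    · rintro ⟨x, hx⟩
      exact ⟨i * x, by linear_combination (-1) * hx + x * x * hi⟩
    · rintro ⟨x, hx⟩
      exact ⟨i * x, by linear_combination (-1) * hx + x * x * hi⟩
  · have : Odd ((p - 1) / 2) := by rw [Nat.odd_iff]; omega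
    rw [this.neg_one_pow, neg_one_mul]

lemma not_dvd_div {p d : ℕ} (hp : p.Prime) (hd : Squarefree d) (hpd : p ∣ d) : ¬ p ∣ d / p := by
  intro h
  have : p * p ∣ d := by
    obtain ⟨k, hk⟩ := h
    refine ⟨k, ?_⟩
    rw [mul_assoc, ← hk, Nat.mul_div_cancel' hpd]
  exact hp.not_isUnit (hd p this)

lemma uu_not_dvd {D : ℤ} {d c p : ℕ} (hp : p.Prime) (hpD : (p : ℤ) ∣ D)
    (hpD2 : ¬ (p : ℤ) ^ 2 ∣ D) (hpc : ¬ p ∣ c) (hd : Squarefree d) : ¬ (p : ℤ) ∣ uu D d c p := by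
  have P := Nat.prime_iff_prime_int.1 hp
  unfold uu
  split_ifs with h
  · intro h'
    rcases P.dvd_or_dvd h' with h' | h'
    · rcases P.dvd_or_dvd h' with h' | h'
      · rw [dvd_neg] at h'
        obtain ⟨k, hk⟩ := h'
        apply hpD2
        refine ⟨k, ?_⟩
        rw [pow_two, mul_assoc, ← hk, Int.mul_ediv_cancel' hpD]
      · exact not_dvd_div hp hd h (by exact_mod_cast h')
    · exact hpc (by exact_mod_cast h')
  · intro h'
    rcases P.dvd_or_dvd h' with h' | h'
    · exact h (by exact_mod_cast h')
    · exact hpc (by exact_mod_cast h')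

lemma local_iff {D : ℤ} {d c p : ℕ} [hp : Fact p.Prime] (hp2 : p ≠ 2) (hpD : (p : ℤ) ∣ D)
    (hpD2 : ¬ (p : ℤ) ^ 2 ∣ D) (hpc : ¬ p ∣ c) (hd : Squarefree d) :
    IsN ℚ_[p] D ((d * c : ℕ) : ℤ) ↔ IsSquare (uu D d c p : ZMod p) := by
  have hnd := uu_not_dvd hp.out hpD hpD2 hpc hd
  have P := PadicInt.prime_p (p := p)
  have hD0 : D ≠ 0 := by rintro rfl; simp at hpD2
  by_cases hpd : p ∣ d
  · have e : uu D d c p = -(D / p) * ((d / p : ℕ) : ℤ) * c := by unfold uu; rw [if_pos hpd]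
    rw [e] at hnd ⊢
    obtain ⟨D', rfl⟩ := hpD
    obtain ⟨d', rfl⟩ := hpd
    have hp0 : (p : ℤ) ≠ 0 := by exact_mod_cast hp.out.ne_zero
    rw [Int.mul_ediv_cancel_left _ hp0, Nat.mul_div_cancel_left _ hp.out.pos] at hnd ⊢
    have hD' : ¬ (p : ℤ) ∣ D' := fun h => hnd (by
      exact ((dvd_neg.2 h).mul_right _).mul_right _)
    have hn' : ¬ (p : ℤ) ∣ (d' : ℤ) * c := fun h => hnd (by
      rw [mul_assoc]; exact h.mul_left _)
    constructor
    · intro h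
      obtain ⟨X, Y, Z, h, hpr⟩ := h.prim
      push_cast at h
      have hX : (p : ℤ_[p]) ∣ X := by
        apply P.dvd_of_dvd_pow (n := 2)
        exact ⟨D' * Y ^ 2 + d' * c * Z ^ 2, by linear_combination h⟩
      obtain ⟨x, rfl⟩ := hX
      have h' : p * x ^ 2 - D' * Y ^ 2 = d' * c * Z ^ 2 := by
        apply mul_left_cancel₀ P.ne_zero
        linear_combination h
      have hZ : ¬ (p : ℤ_[p]) ∣ Z := by
        rintro ⟨z, rfl⟩
        refine hpr ⟨dvd_mul_right _ _, ?_, dvd_mul_right _ _⟩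
        have : (p : ℤ_[p]) ∣ (D' : ℤ_[p]) * Y ^ 2 :=
          ⟨x ^ 2 - d' * c * p * z ^ 2, by linear_combination -h'⟩
        rcases P.dvd_or_dvd this with h2 | h2
        · exact absurd ((dvd_int_iff _).1 h2) hD'
        · exact P.dvd_of_dvd_pow h2
      apply isSquare_of_dvd hZ (X := (D' : ℤ_[p]) * Y)
      push_cast
      exact ⟨D' * x ^ 2, by linear_combination (-(D' : ℤ_[p])) * h'⟩
    · intro h
      obtain ⟨w, hw, hwe⟩ := isSquare_padic hp2 hnd h
      have hD0' : (D' : ℚ_[p]) ≠ 0 := by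
        have : D' ≠ 0 := by rintro rfl; simp at hD0
        exact_mod_cast this
      refine ⟨0, w / D', ?_⟩
      push_cast at hwe ⊢
      field_simp
      rw [hwe]
      ring
  · have e : uu D d c p = d * c := by unfold uu; rw [if_neg hpd]
    rw [e] at hnd ⊢
    constructor
    · intro h
      obtain ⟨X, Y, Z, h, hpr⟩ := h.prim
      obtain ⟨D', rfl⟩ := hpD
      have hD' : ¬ (p : ℤ) ∣ D' := fun ⟨k, hk⟩ => hpD2 ⟨k, by rw [hk]; ring⟩
      push_cast at h
      have hZ : ¬ (p : ℤ_[p]) ∣ Z := by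
        rintro ⟨z, rfl⟩
        have hX : (p : ℤ_[p]) ∣ X := by
          apply P.dvd_of_dvd_pow (n := 2)
          exact ⟨D' * Y ^ 2 + d * c * p * z ^ 2, by linear_combination h⟩
        obtain ⟨x, rfl⟩ := hX
        refine hpr ⟨dvd_mul_right _ _, ?_, dvd_mul_right _ _⟩
        have : (p : ℤ_[p]) ∣ (D' : ℤ_[p]) * Y ^ 2 := by
          refine ⟨x ^ 2 - d * c * z ^ 2, ?_⟩
          apply mul_left_cancel₀ P.ne_zero
          linear_combination -h
        rcases P.dvd_or_dvd this with h2 | h2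
        · exact absurd ((dvd_int_iff _).1 h2) hD'
        · exact P.dvd_of_dvd_pow h2
      apply isSquare_of_dvd hZ (X := X)
      push_cast
      exact ⟨D' * Y ^ 2, by linear_combination h⟩
    · intro h
      obtain ⟨w, hw, hwe⟩ := isSquare_padic hp2 hnd h
      refine ⟨w, 0, ?_⟩
      rw [hwe]
      push_cast
      ring

lemma local_away {D : ℤ} {d c p : ℕ} [hp : Fact p.Prime] (hp2 : p ≠ 2) (hpD : ¬ (p : ℤ) ∣ D)
    (hdD : (d : ℤ) ∣ D) (hc : p ∣ c → IsSquare (D : ZMod p)) :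
    IsN ℚ_[p] D ((d * c : ℕ) : ℤ) := by
  by_cases hpc : p ∣ c
  · obtain ⟨w, hw, hwe⟩ := isSquare_padic hp2 hpD (hc hpc)
    rw [← hwe]
    exact IsN.of_sq two_ne_zero hw _
  · apply IsN.units hp2 hpD
    intro h
    rcases (Nat.Prime.dvd_mul hp.out).1 (by exact_mod_cast h) with h | h
    · exact hpD ((by exact_mod_cast h : (p : ℤ) ∣ d).trans hdD)
    · exact hpc h

lemma jac_prod (a : ℤ) (n : ℕ) (hn : Squarefree n) : J(a | n) = ∏ p ∈ n.primeFactors, J(a | p) := by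
  conv_lhs => rw [← Nat.prod_primeFactors_of_squarefree hn]
  have : ∀ p ∈ n.primeFactors, p ≠ 0 := fun p hp => (Nat.prime_of_mem_primeFactors hp).ne_zero
  generalize n.primeFactors = s at this
  induction s using Finset.induction_on with
  | empty => simp
  | insert p s hps ih =>
    rw [Finset.prod_insert hps, Finset.prod_insert hps, jacobiSym.mul_right', ih]
    · intro q hq; exact this q (Finset.mem_insert_of_mem hq)
    · exact this p (Finset.mem_insert_self _ _)
    · rw [Finset.prod_ne_zero_iff]
      intro q hq; exact this q (Finset.mem_insert_of_mem hq)

lemma jac_eq_one {a : ℤ} {p : ℕ} (hp : p.Prime) (ha : ¬ (p : ℤ) ∣ a)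
    (h : IsSquare (a : ZMod p)) : J(a | p) = 1 := by
  have : Fact p.Prime := ⟨hp⟩
  rw [← jacobiSym.legendreSym.to_jacobiSym, legendreSym.eq_one_iff]
  · exact h
  · rwa [Ne, ZMod.intCast_zmod_eq_zero_iff_dvd]

lemma jac_D_c {D : ℤ} {c : ℕ} (hc0 : c ≠ 0) (hccop : IsCoprime (c : ℤ) D)
    (hcsq : ∀ q : ℕ, q.Prime → q ∣ c → IsSquare ((D : ZMod q))) : J(D | c) = 1 := by
  induction c using Nat.recOnMul with
  | zero => exact absurd rfl hc0
  | one => simp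
  | prime p hp =>
    apply jac_eq_one hp _ (hcsq p hp dvd_rfl)
    intro h
    exact (Nat.prime_iff_prime_int.1 hp).not_isUnit (hccop.isUnit_of_dvd' dvd_rfl h)
  | mul a b iha ihb =>
    rw [mul_ne_zero_iff] at hc0
    push_cast at hccop
    rw [jacobiSym.mul_right' _ hc0.1 hc0.2, iha hc0.1 hccop.of_mul_left_left
      (fun q hq h => hcsq q hq (h.mul_right _)), ihb hc0.2 hccop.of_mul_left_right
      (fun q hq h => hcsq q hq (h.mul_left _)), one_mul]

lemma recip {D : ℤ} {d c : ℕ} (hDneg : D < 0) (hD4 : D % 4 = 1) (hDsq : Squarefree D)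
    (hdD : (d : ℤ) ∣ D) (hcodd : Odd c) (hccop : IsCoprime (c : ℤ) D)
    (hcsq : ∀ q : ℕ, q.Prime → q ∣ c → IsSquare ((D : ZMod q)))
    (r : ℕ) (hr : r.Prime) (hrD : (r : ℤ) ∣ D)
    (h : ∀ p : ℕ, p.Prime → (p : ℤ) ∣ D → p ≠ r → IsSquare (uu D d c p : ZMod p)) :
    IsSquare (uu D d c r : ZMod r) := by
  have hc0 : c ≠ 0 := by rintro rfl; simp at hcodd
  obtain ⟨e', he'⟩ := hdD
  obtain ⟨e, rfl⟩ : ∃ e : ℕ, e' = -(e : ℤ) := by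
    refine ⟨e'.natAbs, ?_⟩
    have : e' ≤ 0 := by
      by_contra hh
      push Not at hh
      have : 0 ≤ (d : ℤ) * e' := by positivity
      omega
    omega
  have hDe : D = -((d * e : ℕ) : ℤ) := by rw [he']; push_cast; ring
  have hde3 : (d * e) % 4 = 3 := by omega
  have hdesq : Squarefree (d * e) := by
    rw [hDe] at hDsq
    rw [← Int.squarefree_natAbs] at hDsq
    simpa [Int.natAbs_mul] using hDsq
  obtain ⟨hcop, hdsq, hesq⟩ := Nat.squarefree_mul_iff.1 hdesq
  have hodde : Odd (d * e) := by rw [Nat.odd_iff]; omega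
  have hd_odd : Odd d := (Nat.odd_mul.1 hodde).1
  have he_odd : Odd e := (Nat.odd_mul.1 hodde).2
  have hd0 := hdsq.ne_zero
  have he0 := hesq.ne_zero
  have hpc : ∀ p : ℕ, p.Prime → (p : ℤ) ∣ D → ¬ p ∣ c := by
    intro p hp hpD hpc
    exact (Nat.prime_iff_prime_int.1 hp).not_isUnit
      (hccop.isUnit_of_dvd' (by exact_mod_cast hpc) hpD)
  have hp2 : ∀ p : ℕ, p.Prime → ¬ (p : ℤ) ^ 2 ∣ D := by
    intro p hp h
    exact (Nat.prime_iff_prime_int.1 hp).not_isUnit (hDsq p (by rwa [pow_two] at h))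
  have hmem : ∀ p ∈ (d * e).primeFactors, p.Prime ∧ (p : ℤ) ∣ D := by
    intro p hp
    refine ⟨Nat.prime_of_mem_primeFactors hp, ?_⟩
    rw [hDe, dvd_neg]
    exact_mod_cast Nat.dvd_of_mem_primeFactors hp
  -- product formula
  have hprod : ∏ p ∈ (d * e).primeFactors, J(uu D d c p | p) = 1 := by
    rw [hcop.primeFactors_mul, Finset.prod_union hcop.disjoint_primeFactors]
    have h1 : ∏ p ∈ d.primeFactors, J(uu D d c p | p) = J((e : ℤ) * c | d) := by
      rw [jac_prod _ d hdsq]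
      apply Finset.prod_congr rfl
      intro p hp
      have hpp := Nat.prime_of_mem_primeFactors hp
      have hpd := Nat.dvd_of_mem_primeFactors hp
      have hu : uu D d c p = ((d / p : ℕ) : ℤ) ^ 2 * ((e : ℤ) * c) := by
        unfold uu
        rw [if_pos hpd]
        have : D / p = -(((d / p : ℕ) : ℤ) * e) := by
          apply Int.ediv_eq_of_eq_mul_right (by exact_mod_cast hpp.ne_zero)
          rw [hDe]
          conv_lhs => rw [← Nat.mul_div_cancel' hpd]
          push_cast
          ring
        rw [this]; ring
      rw [hu, jacobiSym.mul_left, jacobiSym.sq_one', one_mul]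
      rw [Int.gcd_natCast_natCast]
      exact (Nat.coprime_comm.1 ((Nat.Prime.coprime_iff_not_dvd hpp).2 (not_dvd_div hpp hdsq hpd)))
    have h2 : ∏ p ∈ e.primeFactors, J(uu D d c p | p) = J((d : ℤ) * c | e) := by
      rw [jac_prod _ e hesq]
      apply Finset.prod_congr rfl
      intro p hp
      have hpp := Nat.prime_of_mem_primeFactors hp
      have hpe := Nat.dvd_of_mem_primeFactors hp
      have hpd : ¬ p ∣ d := fun h => hpp.one_lt.ne' (Nat.eq_one_of_dvd_coprimes hcop h hpe)
      unfold uu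
      rw [if_neg hpd]
    rw [h1, h2, jacobiSym.mul_left, jacobiSym.mul_left]
    have h3 : J((e : ℤ) | d) * J((d : ℤ) | e) = 1 := by
      have hsq : J((d : ℤ) | e) ^ 2 = 1 := jacobiSym.sq_one (by
        rw [Int.gcd_natCast_natCast]; exact hcop)
      have : d % 4 = 1 ∨ e % 4 = 1 := by
        have hd' := Nat.odd_iff.1 hd_odd
        have he' := Nat.odd_iff.1 he_odd
        by_contra hcon
        push Not at hcon
        have h1 : d % 4 = 3 := by omega
        have h2 : e % 4 = 3 := by omega
        rw [Nat.mul_mod, h1, h2] at hde3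
        norm_num at hde3
      have heq : J((e : ℤ) | d) = J((d : ℤ) | e) := by
        rcases this with h | h
        · exact (jacobiSym.quadratic_reciprocity_one_mod_four h he_odd).symm
        · exact jacobiSym.quadratic_reciprocity_one_mod_four h hd_odd
      rw [heq, ← pow_two, hsq]
    have h4 : J((c : ℤ) | d) * J((c : ℤ) | e) = 1 := by
      rw [← jacobiSym.mul_right' _ hd0 he0]
      have hDc := jac_D_c hc0 hccop hcsq
      rw [hDe, jacobiSym.neg _ hcodd] at hDc
      have hc2 := Nat.odd_iff.1 hcodd
      have : c % 4 = 1 ∨ c % 4 = 3 := by omega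
      rcases this with h | h
      · rw [ZMod.χ₄_nat_one_mod_four h, one_mul] at hDc
        rw [jacobiSym.quadratic_reciprocity_one_mod_four h hodde]
        exact hDc
      · rw [ZMod.χ₄_nat_three_mod_four h,
          jacobiSym.quadratic_reciprocity_three_mod_four hde3 h] at hDc
        linarith
    linear_combination h3 * (J((c : ℤ) | d) * J((c : ℤ) | e)) + h4
  have hrmem : r ∈ (d * e).primeFactors := by
    rw [Nat.mem_primeFactors]
    refine ⟨hr, ?_, mul_ne_zero hd0 he0⟩
    rw [hDe, dvd_neg] at hrD
    exact_mod_cast hrD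
  rw [Finset.prod_eq_single_of_mem r hrmem] at hprod
  · have : Fact r.Prime := ⟨hr⟩
    exact ZMod.isSquare_of_jacobiSym_eq_one hprod
  · intro p hp hpr
    obtain ⟨hpp, hpD⟩ := hmem p hp
    exact jac_eq_one hpp (uu_not_dvd hpp hpD (hp2 p hpp) (hpc p hpp hpD) hdsq) (h p hpp hpD hpr)

lemma odd_sq_not_dvd {D m : ℤ} (hm : Squarefree m) (hDm : D = m ∧ m % 4 = 1 ∨ D = 4 * m) {p : ℕ}
    (hp : p.Prime) (hp2 : p ≠ 2) : ¬ (p : ℤ) ^ 2 ∣ D := by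
  have P := Nat.prime_iff_prime_int.1 hp
  intro h
  have : (p : ℤ) ^ 2 ∣ m := by
    rcases hDm with ⟨rfl, -⟩ | rfl
    · exact h
    · refine IsCoprime.dvd_of_dvd_mul_left ?_ h
      have : Nat.Coprime (p ^ 2) (2 ^ 2) :=
        Nat.Coprime.pow 2 2 ((Nat.coprime_primes hp Nat.prime_two).2 hp2)
      exact_mod_cast Nat.isCoprime_iff_coprime.2 this
  exact P.not_isUnit (hm p (by rwa [pow_two] at this))

/-- global criterion -/
lemma global_iff {D m : ℤ} (hm : Squarefree m) (hDm : D = m ∧ m % 4 = 1 ∨ D = 4 * m)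
    {d c : ℕ} (hd : Squarefree d) (hdD : (d : ℤ) ∣ D) (hc0 : c ≠ 0) (hccop : IsCoprime (c : ℤ) D)
    (hcsq : ∀ q : ℕ, q.Prime → q ∣ c → IsSquare ((D : ZMod q))) :
    IsN ℚ m ((d * c : ℕ) : ℚ) ↔
      ∀ p : ℕ, p.Prime → p ≠ 2 → (p : ℤ) ∣ D → IsSquare (uu D d c p : ZMod p) := by
  have hF : ∀ (F : Type) [Field F] [CharZero F] (b : F), IsN F (D : F) b ↔ IsN F (m : F) b := by
    intro F _ _ b
    rcases hDm with ⟨rfl, -⟩ | rfl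
    · rfl
    · rw [← IsN.left_sq (a := (m : F)) (k := 2) two_ne_zero]
      rw [show ((4 * m : ℤ) : F) = m * 2 ^ 2 by push_cast; ring]
  have hpc : ∀ p : ℕ, p.Prime → (p : ℤ) ∣ D → ¬ p ∣ c := by
    intro p hp hpD hpc
    exact (Nat.prime_iff_prime_int.1 hp).not_isUnit
      (hccop.isUnit_of_dvd' (by exact_mod_cast hpc) hpD)
  constructor
  · intro h p hp hp2 hpD
    have : Fact p.Prime := ⟨hp⟩
    rw [← local_iff hp2 hpD (odd_sq_not_dvd hm hDm hp hp2) (hpc p hp hpD) hd, hF]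
    obtain ⟨x, y, h⟩ := h
    refine ⟨x, y, ?_⟩
    exact_mod_cast congrArg (Rat.cast : ℚ → ℚ_[p]) h
  · intro h
    obtain ⟨c0, s, hcs, hc0sq⟩ := Nat.sq_mul_squarefree c
    have hs0 : s ≠ 0 := by rintro rfl; simp at hcs; exact hc0 hcs.symm
    have hdc0 : Squarefree (d * c0) := by
      rw [Nat.squarefree_mul_iff]
      refine ⟨?_, hd, hc0sq⟩
      have h1 : IsCoprime (c : ℤ) d := hccop.of_isCoprime_of_dvd_right hdD
      have h2 : Nat.Coprime c d := Nat.isCoprime_iff_coprime.1 h1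
      exact (Nat.Coprime.coprime_dvd_left ⟨s ^ 2, by rw [← hcs]; ring⟩ h2).symm
    have hH : IsN ℚ (m : ℚ) (((d * c0 : ℕ) : ℤ) : ℚ) := by
      apply hasse m _ hm (Int.squarefree_natCast.2 hdc0)
      · rintro ⟨-, h⟩
        omega
      · intro p hpf hp2
        have hsp : (s : ℚ_[p]) ≠ 0 := by exact_mod_cast hs0
        apply IsN.cancel_sq hsp
        rw [← hF]
        have : ((((d * c0 : ℕ) : ℤ) : ℚ_[p])) * s ^ 2 = (((d * c : ℕ) : ℤ) : ℚ_[p]) := by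
          rw [← hcs]; push_cast; ring
        rw [this]
        by_cases hpD : (p : ℤ) ∣ D
        · rw [local_iff hp2 hpD (odd_sq_not_dvd hm hDm hpf.out hp2) (hpc p hpf.out hpD) hd]
          exact h p hpf.out hp2 hpD
        · exact local_away hp2 hpD hdD (hcsq p hpf.out)
    have := hH.mul (IsN.sq (m : ℚ) (s : ℚ))
    convert this using 1
    rw [← hcs]; push_cast; ring

end core


section fin
variable {D : ℤ} {t : ℕ} {p : Fin t → ℕ}

lemma padic_prod (hp : ∀ i, (p i).Prime) (hinj : Function.Injective p) (e : Fin t → ℕ) (i : Fin t) :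
    padicValNat (p i) (∏ j, p j ^ e j) = e i := by
  have : Fact (p i).Prime := ⟨hp i⟩
  rw [← Finset.mul_prod_erase Finset.univ _ (Finset.mem_univ i), padicValNat.mul
    (pow_ne_zero _ (hp i).ne_zero)
    (Finset.prod_ne_zero_iff.2 fun j _ => pow_ne_zero _ (hp j).ne_zero), padicValNat.prime_pow,
    padicValNat.eq_zero_of_not_dvd, add_zero]
  intro h
  obtain ⟨j, hj, hd⟩ := (Prime.dvd_finsetProd_iff (hp i).prime _).1 h
  have := (Nat.prime_dvd_prime_iff_eq (hp i) (hp j)).1 ((hp i).dvd_of_dvd_pow hd)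
  exact (Finset.mem_erase.1 hj).1 (hinj this).symm

lemma val_le_one (x : ZMod 2) : x.val ≤ 1 := by
  have := ZMod.val_lt x
  omega

lemma prod_coprime (hp : ∀ i, (p i).Prime) (hinj : Function.Injective p) (e : Fin t → ℕ) :
    Pairwise (Function.onFun IsCoprime fun j => ((p j : ℤ) ^ e j)) := by
  intro i j hij
  apply IsCoprime.pow
  rw [Nat.isCoprime_iff_coprime]
  exact (Nat.coprime_primes (hp i) (hp j)).2 (fun h => hij (hinj h))

lemma prod_sqf (hp : ∀ i, (p i).Prime) (hinj : Function.Injective p) (X : Fin t → ZMod 2) :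
    Squarefree (∏ j, p j ^ (X j).val) := by
  rw [← Int.squarefree_natCast]
  push_cast
  apply Finset.squarefree_prod_of_pairwise_isCoprime
  · intro i _ j _ hij
    exact (prod_coprime hp hinj (fun j => (X j).val) hij).isRelPrime
  · intro i _
    have := val_le_one (X i)
    interval_cases (X i).val
    · simp
    · simpa using (Nat.prime_iff_prime_int.1 (hp i)).squarefree

lemma prod_dvd (hp : ∀ i, (p i).Prime) (hinj : Function.Injective p)
    (hdvd : ∀ i, (p i : ℤ) ∣ D) (X : Fin t → ZMod 2) :
    ((∏ j, p j ^ (X j).val : ℕ) : ℤ) ∣ D := by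
  push_cast
  apply Finset.prod_dvd_of_coprime
  · intro i _ j _ hij
    exact prod_coprime hp hinj (fun j => (X j).val) hij
  · intro i _
    have := val_le_one (X i)
    interval_cases (X i).val
    · simp
    · simpa using hdvd i

lemma prod_recover (hp : ∀ i, (p i).Prime) (hinj : Function.Injective p)
    (hdvd : ∀ i, (p i : ℤ) ∣ D)
    (hall : ∀ q : ℕ, q.Prime → (q : ℤ) ∣ D → ∃ i, p i = q) {d : ℕ} (hd : Squarefree d)
    (hdD : (d : ℤ) ∣ D) : ∏ i, p i ^ ((padicValNat (p i) d : ZMod 2)).val = d := by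
  rw [Nat.eq_iff_prime_padicValNat_eq _ _
    (Finset.prod_ne_zero_iff.2 fun j _ => pow_ne_zero _ (hp j).ne_zero) hd.ne_zero]
  intro q hq
  by_cases hqD : (q : ℤ) ∣ D
  · obtain ⟨i, rfl⟩ := hall q hq hqD
    rw [padic_prod hp hinj, ZMod.val_natCast]
    have : padicValNat (p i) d ≤ 1 := by
      rw [← Nat.factorization_def _ hq]
      exact hd.natFactorization_le_one _
    exact Nat.mod_eq_of_lt (by omega)
  · rw [padicValNat.eq_zero_of_not_dvd, padicValNat.eq_zero_of_not_dvd]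
    · intro h
      exact hqD ((Int.natCast_dvd_natCast.2 h).trans hdD)
    · intro h
      exact hqD ((Int.natCast_dvd_natCast.2 h).trans (prod_dvd hp hinj hdvd _))

lemma aLeg_one (q : ℕ) : aLeg 1 q = 0 := by
  rw [aLeg_eq_zero_iff]; simp

lemma aLeg_prod {q : ℕ} (hq : q.Prime) {ι : Type} (s : Finset ι) (g : ι → ℤ) (X : ι → ZMod 2)
    (hg : ∀ i ∈ s, ¬ (q : ℤ) ∣ g i) :
    aLeg (∏ i ∈ s, g i ^ (X i).val) q = ∑ i ∈ s, aLeg (g i) q * X i := by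
  classical
  induction s using Finset.induction_on with
  | empty => simp [aLeg_one]
  | insert i s his ih =>
    have P := Nat.prime_iff_prime_int.1 hq
    rw [Finset.prod_insert his, Finset.sum_insert his, aLeg_mul hq,
      ih fun j hj => hg j (Finset.mem_insert_of_mem hj)]
    · congr 1
      generalize X i = x
      rcases (by decide : ∀ x : ZMod 2, x = 0 ∨ x = 1) x with rfl | rfl
      · rw [ZMod.val_zero]; simp [aLeg_one]
      · rw [show (1 : ZMod 2).val = 1 from rfl]; simp
    · exact fun h => hg i (Finset.mem_insert_self _ _) (P.dvd_of_dvd_pow h)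
    · intro h
      obtain ⟨j, hj, hd⟩ := (Prime.dvd_finsetProd_iff P _).1 h
      exact hg j (Finset.mem_insert_of_mem hj) (P.dvd_of_dvd_pow hd)

lemma row_iff (hp : ∀ i, (p i).Prime) (hinj : Function.Injective p)
    (hdvd : ∀ i, (p i : ℤ) ∣ D) {c : ℕ} (X : Fin t → ZMod 2) (i : Fin (t - 1))
    (hi2 : p (i.castLE (Nat.sub_le t 1)) ≠ 2) (hsq : ¬ (p (i.castLE (Nat.sub_le t 1)) : ℤ) ^ 2 ∣ D)
    (hc : ¬ p (i.castLE (Nat.sub_le t 1)) ∣ c) :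
    (redeiMatrix D t p).mulVec X i = aLeg (c : ℤ) (p (i.castLE (Nat.sub_le t 1))) ↔
      IsSquare ((uu D (∏ j, p j ^ (X j).val) c (p (i.castLE (Nat.sub_le t 1))) : ℤ) :
        ZMod (p (i.castLE (Nat.sub_le t 1)))) := by
  set k : Fin t := i.castLE (Nat.sub_le t 1) with hk
  have P := Nat.prime_iff_prime_int.1 (hp k)
  have hDk : ¬ (p k : ℤ) ∣ D / p k := by
    rintro ⟨z, hz⟩
    exact hsq ⟨z, by rw [pow_two, mul_assoc, ← hz, Int.mul_ediv_cancel' (hdvd k)]⟩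
  have hne : ∀ j, j ≠ k → ¬ (p k : ℤ) ∣ p j := by
    intro j hj h
    exact hj (hinj ((Nat.prime_dvd_prime_iff_eq (hp k) (hp j)).1 (by exact_mod_cast h))).symm
  have hng : ∀ j ∈ Finset.univ, ¬ (p k : ℤ) ∣ (if j = k then -(D / p k) else (p j : ℤ)) := by
    intro j _
    split_ifs with h
    · rwa [dvd_neg]
    · exact hne j h
  have hrow : (redeiMatrix D t p).mulVec X i =
      aLeg (∏ j, (if j = k then -(D / p k) else (p j : ℤ)) ^ (X j).val) (p k) := by
    rw [aLeg_prod (hp k) _ _ _ hng]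
    unfold Matrix.mulVec dotProduct
    apply Finset.sum_congr rfl
    intro j _
    congr 1
    simp only [redeiMatrix, Matrix.of_apply]
    by_cases h : j = k
    · subst h
      rw [if_pos rfl, if_pos rfl]
      exact aLeg_star (hp _) hi2 D
    · rw [if_neg h, if_neg]
      intro h'
      exact h (Fin.ext h'.symm)
  have hprodnd : ¬ (p k : ℤ) ∣ ∏ j, (if j = k then -(D / p k) else (p j : ℤ)) ^ (X j).val := by
    intro h
    obtain ⟨j, hj, hd⟩ := (Prime.dvd_finsetProd_iff P _).1 h
    exact hng j hj (P.dvd_of_dvd_pow hd)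
  have huu : uu D (∏ j, p j ^ (X j).val) c (p k) =
      (∏ j, (if j = k then -(D / p k) else (p j : ℤ)) ^ (X j).val) * c := by
    have hd : ∏ j, p j ^ (X j).val = p k ^ (X k).val * ∏ j ∈ Finset.univ.erase k, p j ^ (X j).val :=
      (Finset.mul_prod_erase Finset.univ _ (Finset.mem_univ k)).symm
    have hA : (∏ j, (if j = k then -(D / p k) else (p j : ℤ)) ^ (X j).val) =
        (-(D / p k)) ^ (X k).val * ((∏ j ∈ Finset.univ.erase k, p j ^ (X j).val : ℕ) : ℤ) := by
      rw [← Finset.mul_prod_erase Finset.univ _ (Finset.mem_univ k), if_pos rfl]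
      congr 1
      push_cast
      apply Finset.prod_congr rfl
      intro j hj
      rw [if_neg (Finset.mem_erase.1 hj).1]
    have hE : ¬ p k ∣ ∏ j ∈ Finset.univ.erase k, p j ^ (X j).val := by
      intro h
      obtain ⟨j, hj, hd⟩ := (Prime.dvd_finsetProd_iff (hp k).prime _).1 h
      exact hne j (Finset.mem_erase.1 hj).1 (by exact_mod_cast (hp k).dvd_of_dvd_pow hd)
    rw [hd, hA]
    have := val_le_one (X k)
    unfold uu
    generalize ∏ j ∈ Finset.univ.erase k, p j ^ (X j).val = E at *
    interval_cases (X k).val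
    · rw [if_neg (by simpa using hE)]; simp
    · rw [if_pos (by simp)]
      rw [pow_one, pow_one, Nat.mul_div_cancel_left _ (hp k).pos]
  rw [hrow, huu, ← aLeg_eq_zero_iff, aLeg_mul (hp k) hprodnd (by exact_mod_cast hc),
    CharTwo.add_eq_zero]

end fin

open NumberField
/-- for `c` positive, odd, coprime to `D` with `(D/q) = 1` for all primes `q ∣ c`,
the map `d ↦ X_d` is a bijection from `{d ∈ D(K) : d·c ∈ N(K^×)}` onto `{X : R·X = C}`, where
`C = ([c/p₁], …, [c/p_{t−1}])ᵀ`, with inverse `(x₁, …, x_t) ↦ Π p_i^{x_i}`. -/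
theorem stmt_6 (K : Type) [Field K] [NumberField K]
    (hdeg : Module.finrank ℚ K = 2)
    (him : ∀ v : InfinitePlace K, v.IsComplex)
    (D : ℤ) (hD : D = discr K)
    (t : ℕ) (p : Fin t → ℕ) (hp : ∀ i, (p i).Prime) (hinj : Function.Injective p)
    (hdvd : ∀ i, (p i : ℤ) ∣ D)
    (hall : ∀ q : ℕ, q.Prime → (q : ℤ) ∣ D → ∃ i, p i = q)
    (hord : ∀ i : Fin t, p i = 2 → (i : ℕ) = t - 1)
    (c : ℕ) (hcpos : 0 < c) (hcodd : Odd c) (hccop : IsCoprime (c : ℤ) D)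
    (hcsq : ∀ q : ℕ, q.Prime → q ∣ c → IsSquare ((D : ZMod q)))
    (S : Set ℕ)
    (hS : S = {d : ℕ | 0 < d ∧ Squarefree d ∧ (d : ℤ) ∣ D ∧
      ∃ x : K, x ≠ 0 ∧ Algebra.norm ℚ x = ((d * c : ℕ) : ℚ)})
    (φ : ℕ → Fin t → ZMod 2)
    (hφ : φ = fun d i => (padicValNat (p i) d : ZMod 2))
    (C : Fin (t - 1) → ZMod 2)
    (hC : C = fun i => aLeg (c : ℤ) (p (i.castLE (Nat.sub_le t 1)))) :
    -- φ maps S into the solution set of R·X = C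
    (∀ d ∈ S, (redeiMatrix D t p).mulVec (φ d) = C) ∧
    -- φ is injective on S
    (∀ d₁ ∈ S, ∀ d₂ ∈ S, φ d₁ = φ d₂ → d₁ = d₂) ∧
    -- φ is surjective onto the solution set, with inverse X ↦ Π p_i^{x_i}
    (∀ X : Fin t → ZMod 2, (redeiMatrix D t p).mulVec X = C →
      (∏ i, p i ^ (X i).val) ∈ S ∧ φ (∏ i, p i ^ (X i).val) = X) ∧
    -- the inverse formula recovers d
    (∀ d ∈ S, ∏ i, p i ^ (φ d i).val = d) := by
  obtain ⟨m, hm, hm0, hDm, hnorm⟩ := nf hdeg him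
  rw [← hD] at hDm
  have hc0 : c ≠ 0 := hcpos.ne'
  have hpc : ∀ i, ¬ p i ∣ c := by
    intro i h
    exact (Nat.prime_iff_prime_int.1 (hp i)).not_isUnit
      (hccop.isUnit_of_dvd' (by exact_mod_cast h) (hdvd i))
  have hlt : ∀ i : Fin (t - 1), p (i.castLE (Nat.sub_le t 1)) ≠ 2 := by
    intro i h
    have h1 := hord _ h
    have h2 := i.isLt
    simp at h1
    omega
  have hsys : ∀ X : Fin t → ZMod 2, (redeiMatrix D t p).mulVec X = C ↔
      ∀ i : Fin (t - 1), IsSquare ((uu D (∏ j, p j ^ (X j).val) c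
        (p (i.castLE (Nat.sub_le t 1))) : ℤ) : ZMod (p (i.castLE (Nat.sub_le t 1)))) := by
    intro X
    rw [funext_iff, hC]
    refine forall_congr' fun i => ?_
    exact row_iff hp hinj hdvd X i (hlt i) (odd_sq_not_dvd hm hDm (hp _) (hlt i)) (hpc _)
  have hmain : ∀ X : Fin t → ZMod 2, (redeiMatrix D t p).mulVec X = C ↔
      ∃ x : K, x ≠ 0 ∧ Algebra.norm ℚ x = (((∏ j, p j ^ (X j).val) * c : ℕ) : ℚ) := by
    intro X
    have hd := prod_sqf hp hinj X
    have hdD := prod_dvd hp hinj hdvd X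
    rw [hsys, hnorm _ (by exact_mod_cast mul_ne_zero hd.ne_zero hc0),
      global_iff hm hDm hd hdD hc0 hccop hcsq]
    generalize (∏ j, p j ^ (X j).val) = d at hd hdD
    constructor
    · intro h q hq hq2 hqD
      have hlast : ∀ j : Fin t, (j : ℕ) ≠ t - 1 → IsSquare ((uu D d c (p j) : ℤ) : ZMod (p j)) := by
        intro j hj
        exact h ⟨j, by have := j.isLt; omega⟩
      obtain ⟨j, rfl⟩ := hall q hq hqD
      by_cases hj : (j : ℕ) = t - 1
      · rcases hDm with ⟨hDm, h4⟩ | hDm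
        · subst hDm
          refine recip hm0 h4 hm hdD hcodd hccop hcsq _ hq hqD ?_
          intro r hr hrD hrj
          obtain ⟨k, rfl⟩ := hall r hr hrD
          apply hlast
          intro hk
          exact hrj (congrArg p (Fin.ext (hk.trans hj.symm)))
        · exfalso
          obtain ⟨k, hk⟩ := hall 2 Nat.prime_two ⟨2 * m, by rw [hDm]; push_cast; ring⟩
          apply hq2
          rw [← hk]
          exact congrArg p (Fin.ext (hj.trans (hord k hk).symm))
      · exact hlast j hj
    · intro h i
      exact h _ (hp _) (hlt i) (hdvd _)
  have hrec : ∀ d ∈ S, ∏ i, p i ^ (φ d i).val = d := by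
    intro d hd
    rw [hS] at hd
    rw [hφ]
    exact prod_recover hp hinj hdvd hall hd.2.1 hd.2.2.1
  refine ⟨?_, ?_, ?_, hrec⟩
  · intro d hd
    rw [hmain, hrec d hd]
    rw [hS] at hd
    exact hd.2.2.2
  · intro d₁ h₁ d₂ h₂ h
    rw [← hrec d₁ h₁, ← hrec d₂ h₂, h]
  · intro X hX
    have hd := prod_sqf hp hinj X
    refine ⟨?_, ?_⟩
    · rw [hS]
      exact ⟨Nat.pos_of_ne_zero hd.ne_zero, hd, prod_dvd hp hinj hdvd X, (hmain X).1 hX⟩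
    · rw [hφ]
      funext i
      simp only
      rw [padic_prod hp hinj, ZMod.natCast_zmod_val]
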